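/- Let O be a commutative ring, G a group, n ≥ 1, and A a G-graded crossed product over O. Then A≀Sₙ, with its (G≀Sₙ)-grading given by (A≀Sₙ)_{((g₁,…,gₙ),σ)} = (A_{g₁} ⊗ … ⊗ A_{gₙ}) ⊗ Oσ, is a (G≀Sₙ)-graded crossed product; explicitly, if u_g is an invertible element of A lying in A_g for each g ∈ G, then u_{((g₁,…,gₙ),σ)} := (u_{g₁} ⊗ … ⊗ u_{gₙ}) ⊗ σ is an invertible homogeneous element of (A≀Sₙ)_{((g₁,…,gₙ),σ)}, with inverse (u_{g_{σ(1)}}⁻¹ ⊗ … ⊗ u_{g_{σ(n)}}⁻¹) ⊗ σ⁻¹. -/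

import Mathlib

/-!
Write `t ⊗ σ` for `e t * s σ`. The relation `(t ⊗ σ)(t' ⊗ τ) = (t * ^σ t') ⊗ στ` makes the
inverse of `t ⊗ σ`, for a unit `t` of `A^{⊗n}`, equal to `^{σ⁻¹}(t⁻¹) ⊗ σ⁻¹`, and reduces closure
of the grading under products to its invariance under permutation of the tensor factors.

The decomposition is obtained in two stages. The tensor product `A^{⊗n}` is the direct sum of the
spans of `A_{g₁} ⊗ … ⊗ A_{gₙ}`; a tensor product of inclusions of submodules need not be injective,
so these components are separated by tensor products of the projections of `A` onto the `A_g`.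
Each summand `A^{⊗n} ⊗ σ` of the wreath product then carries a copy of this decomposition, and
in a modular lattice the independent refinement of an independent family is independent.
-/

open scoped TensorProduct
open PiTensorProduct MulOpposite

/-- `𝒜` is a `G`-grading of the `O`-algebra `A`. -/
def IsAlgebraGrading (O : Type*) [CommRing O] {G : Type*} [Group G] {A : Type*}
    [Ring A] [Algebra O A] (𝒜 : G → Submodule O A) : Prop :=
  (1 : A) ∈ 𝒜 1 ∧
  (∀ ⦃g h : G⦄, ∀ a ∈ 𝒜 g, ∀ b ∈ 𝒜 h, a * b ∈ 𝒜 (g * h)) ∧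
  (letI := Classical.decEq G; DirectSum.IsInternal 𝒜)

/-- The componentwise grading on a tensor product of graded modules: the
`(g₁,…,gₙ)`-component is spanned by the pure tensors of homogeneous elements. -/
def tensorGrading (O : Type*) [CommRing O] {n : ℕ} {G : Fin n → Type*}
    {M : Fin n → Type*} [∀ i, AddCommGroup (M i)] [∀ i, Module O (M i)]
    (ℳ : ∀ i, G i → Submodule O (M i)) (g : ∀ i, G i) : Submodule O (⨂[O] i, M i) :=
  Submodule.span O {x | ∃ m : ∀ i, M i, (∀ i, m i ∈ ℳ i (g i)) ∧ x = tprod O m}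

/-- The permutation action of `Sₙ` on `Gⁿ`, `^σ(g₁,…,gₙ) = (g_{σ⁻¹(1)},…,g_{σ⁻¹(n)})`. -/
def permMulAut (G : Type*) [Group G] (n : ℕ) :
    Equiv.Perm (Fin n) →* MulAut (Fin n → G) where
  toFun σ :=
    { toEquiv := Equiv.arrowCongr σ (Equiv.refl G)
      map_mul' := fun _ _ => rfl }
  map_one' := by ext g i; rfl
  map_mul' := fun σ τ => by ext g i; rfl

/-- The wreath product `G ≀ Sₙ = Gⁿ ⋊ Sₙ`. -/
abbrev WreathGroup (G : Type*) [Group G] (n : ℕ) :=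
  SemidirectProduct (Fin n → G) (Equiv.Perm (Fin n)) (permMulAut G n)

/-- `(e, s)` presents the `O`-algebra `W` as the wreath product `T ≀ Sₙ` of the
`O`-algebra `T` (typically `T = A^{⊗n}`, carrying an `Sₙ`-action `Φ`):
`e` is injective, `W = ⊕_σ e(T)·s(σ)` as an `O`-module, and
`s(σ) e(t) = e(^σ t) s(σ)`. -/
def IsWreathPresentation (O : Type*) [CommRing O] {n : ℕ} {T W : Type*}
    [Ring T] [Algebra O T] [Ring W] [Algebra O W]
    (e : T →ₐ[O] W) (s : Equiv.Perm (Fin n) →* Wˣ)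
    (Φ : Equiv.Perm (Fin n) →* (T ≃ₐ[O] T)) : Prop :=
  Function.Injective e ∧
  (letI := Classical.decEq (Equiv.Perm (Fin n));
    DirectSum.IsInternal fun σ : Equiv.Perm (Fin n) =>
      Submodule.map (LinearMap.mulRight O ((s σ : Wˣ) : W))
        (Subalgebra.toSubmodule e.range)) ∧
  ∀ (σ : Equiv.Perm (Fin n)) (t : T),
    ((s σ : Wˣ) : W) * e t = e (Φ σ t) * ((s σ : Wˣ) : W)

/-- The `((g₁,…,gₙ),σ)`-component `(A_{g₁} ⊗ … ⊗ A_{gₙ}) ⊗ Oσ` of `A ≀ Sₙ`. -/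
def wreathGrading (O : Type*) [CommRing O] {G : Type*} [Group G] {n : ℕ}
    {A W : Type*} [Ring A] [Algebra O A] [Ring W] [Algebra O W]
    (𝒜 : G → Submodule O A) (e : (⨂[O] _i : Fin n, A) →ₐ[O] W)
    (s : Equiv.Perm (Fin n) →* Wˣ) (x : WreathGroup G n) : Submodule O W :=
  Submodule.map ((LinearMap.mulRight O ((s x.right : Wˣ) : W)).comp e.toLinearMap)
    (tensorGrading O (fun _ : Fin n => 𝒜) x.left)

/-- `𝒜` is a `G`-graded crossed product structure on the `O`-algebra `A`. -/
def IsCrossedProduct (O : Type*) [CommRing O] {G : Type*} [Group G] {A : Type*}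
    [Ring A] [Algebra O A] (𝒜 : G → Submodule O A) : Prop :=
  IsAlgebraGrading O 𝒜 ∧ ∀ g : G, ∃ u : Aˣ, (u : A) ∈ 𝒜 g

theorem iSupIndep_sigma {α ι : Type*} {κ : ι → Type*} [CompleteLattice α] [IsModularLattice α]
    {p : ι → α} {q : ∀ i, κ i → α} (hp : iSupIndep p) (hq : ∀ i, iSupIndep (q i))
    (hqp : ∀ i k, q i k ≤ p i) : iSupIndep fun x : Σ i, κ i => q x.1 x.2 := by
  rintro ⟨i, k⟩
  have hwithin : Disjoint (q i k) (⨆ (k') (_ : k' ≠ k), q i k') := hq i k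
  have hacross : Disjoint (q i k ⊔ ⨆ (k') (_ : k' ≠ k), q i k') (⨆ (i') (_ : i' ≠ i), p i') :=
    (hp i).mono_left (sup_le (hqp i k) (iSup₂_le fun k' _ => hqp i k'))
  refine (hwithin.disjoint_sup_right_of_disjoint_sup_left hacross).mono_right ?_
  refine iSup₂_le fun ⟨i', k'⟩ hne => ?_
  by_cases hi : i' = i
  · subst hi
    have hk : k' ≠ k := fun hk => hne (by rw [hk])
    exact le_sup_of_le_left (le_iSup₂_of_le k' hk le_rfl)
  · exact le_sup_of_le_right (le_iSup₂_of_le i' hi (hqp i' k'))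

theorem isCompl_iSup_ne {α ι : Type*} [CompleteLattice α] {p : ι → α} (hp : iSupIndep p)
    (htop : ⨆ i, p i = ⊤) (i : ι) : IsCompl (p i) (⨆ (j) (_ : j ≠ i), p j) :=
  ⟨hp i, codisjoint_iff.2 (by rw [← iSup_split_single p i, htop])⟩

theorem isAlgebraGrading_iff {O G A : Type*} [CommRing O] [Group G] [Ring A] [Algebra O A]
    {𝒜 : G → Submodule O A} :
    IsAlgebraGrading O 𝒜 ↔ (1 : A) ∈ 𝒜 1 ∧
      (∀ ⦃g h : G⦄, ∀ a ∈ 𝒜 g, ∀ b ∈ 𝒜 h, a * b ∈ 𝒜 (g * h)) ∧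
      iSupIndep 𝒜 ∧ ⨆ g, 𝒜 g = ⊤ := by
  let := Classical.decEq G
  rw [IsAlgebraGrading, DirectSum.isInternal_submodule_iff_iSupIndep_and_iSup_eq_top]

section TensorGrading

section Module

variable {O : Type*} [CommRing O] {n : ℕ} {G : Fin n → Type*} {M : Fin n → Type*}
  [∀ i, AddCommGroup (M i)] [∀ i, Module O (M i)] {ℳ : ∀ i, G i → Submodule O (M i)}

theorem tprod_mem_tensorGrading {g : ∀ i, G i} {m : ∀ i, M i} (hm : ∀ i, m i ∈ ℳ i (g i)) :
    tprod O m ∈ tensorGrading O ℳ g :=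
  Submodule.subset_span ⟨m, hm, rfl⟩

theorem tensorGrading_le_iff {g : ∀ i, G i} {N : Submodule O (⨂[O] i, M i)} :
    tensorGrading O ℳ g ≤ N ↔ ∀ m : ∀ i, M i, (∀ i, m i ∈ ℳ i (g i)) → tprod O m ∈ N := by
  refine ⟨fun h m hm => h (tprod_mem_tensorGrading hm), fun h => Submodule.span_le.2 ?_⟩
  rintro _ ⟨m, hm, rfl⟩
  exact h m hm

theorem iSup_tensorGrading_eq_top (htop : ∀ i, ⨆ k, ℳ i k = ⊤) :
    ⨆ g, tensorGrading O ℳ g = ⊤ := by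
  classical
  rw [eq_top_iff, ← span_tprod_eq_top, Submodule.span_le]
  rintro _ ⟨m, rfl⟩
  have hdecomp : ∀ i, ∃ f : G i →₀ M i, (∀ k, f k ∈ ℳ i k) ∧ ∑ k ∈ f.support, f k = m i :=
    fun i => (Submodule.mem_iSup_iff_exists_finsupp _ _).1 (htop i ▸ Submodule.mem_top)
  choose f hf hsum using hdecomp
  rw [← funext hsum, MultilinearMap.map_sum_finset]
  exact Submodule.sum_mem _ fun g _ =>
    Submodule.mem_iSup_of_mem g (tprod_mem_tensorGrading fun i => hf i (g i))

theorem iSupIndep_tensorGrading (hind : ∀ i, iSupIndep (ℳ i)) (htop : ∀ i, ⨆ k, ℳ i k = ⊤) :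
    iSupIndep (tensorGrading O ℳ) := by
  intro g
  have hcompl := fun i => isCompl_iSup_ne (hind i) (htop i) (g i)
  let π : (⨂[O] i, M i) →ₗ[O] ⨂[O] i, M i :=
    PiTensorProduct.map fun i => Submodule.projection _ _ (hcompl i)
  have hid : tensorGrading O ℳ g ≤ LinearMap.eqLocus π LinearMap.id :=
    tensorGrading_le_iff.2 fun m hm => by
      rw [LinearMap.mem_eqLocus, PiTensorProduct.map_tprod, LinearMap.id_apply]
      exact congrArg _ (funext fun i => Submodule.projection_apply_of_mem_left _ (hm i))
  have hker : ∀ k, k ≠ g → tensorGrading O ℳ k ≤ LinearMap.ker π := fun k hk =>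
    tensorGrading_le_iff.2 fun m hm => by
      obtain ⟨i, hi⟩ := Function.ne_iff.1 hk
      rw [LinearMap.mem_ker, PiTensorProduct.map_tprod]
      refine MultilinearMap.map_coord_zero _ i (Submodule.projection_apply_of_mem_right _ ?_)
      exact Submodule.mem_iSup_of_mem (k i) (Submodule.mem_iSup_of_mem hi (hm i))
  refine Submodule.disjoint_def.2 fun x hx hx' => ?_
  rw [← LinearMap.id_apply (R := O) x, ← hid hx]
  exact iSup₂_le hker hx'

end Module

section Algebra

variable {O : Type*} [CommRing O] {n : ℕ} {G : Fin n → Type*} {A : Fin n → Type*}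
  [∀ i, Ring (A i)] [∀ i, Algebra O (A i)] {𝒜 : ∀ i, G i → Submodule O (A i)}

theorem tensorGrading_mul_le [∀ i, Mul (G i)]
    (hmul : ∀ i, ∀ ⦃g h : G i⦄, ∀ a ∈ 𝒜 i g, ∀ b ∈ 𝒜 i h, a * b ∈ 𝒜 i (g * h))
    (g h : ∀ i, G i) :
    tensorGrading O 𝒜 g * tensorGrading O 𝒜 h ≤ tensorGrading O 𝒜 (g * h) := by
  rw [tensorGrading, tensorGrading, Submodule.span_mul_span, Submodule.span_le]
  rintro _ ⟨_, ⟨a, ha, rfl⟩, _, ⟨b, hb, rfl⟩, rfl⟩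
  simp only [tprod_mul_tprod]
  exact tprod_mem_tensorGrading fun i => hmul i _ (ha i) _ (hb i)

theorem isAlgebraGrading_tensorGrading [∀ i, Group (G i)]
    (h𝒜 : ∀ i, IsAlgebraGrading O (𝒜 i)) : IsAlgebraGrading O (tensorGrading O 𝒜) := by
  simp only [isAlgebraGrading_iff, forall_and] at h𝒜 ⊢
  obtain ⟨hone, hmul, hind, htop⟩ := h𝒜
  exact ⟨tprod_mem_tensorGrading hone,
    fun g h a ha b hb => tensorGrading_mul_le hmul g h (Submodule.mul_mem_mul ha hb),
    iSupIndep_tensorGrading hind htop, iSup_tensorGrading_eq_top htop⟩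

theorem tprod_mul_tprod_eq_one {a b : ∀ i, A i} (h : ∀ i, a i * b i = 1) :
    tprod O a * tprod O b = 1 := by
  rw [tprod_mul_tprod, one_def, show a * b = 1 from funext h]

end Algebra

theorem tensorGrading_le_comap_perm {O : Type*} [CommRing O] {n : ℕ} {G M : Type*}
    [AddCommGroup M] [Module O M] {ℳ : G → Submodule O M} {σ : Equiv.Perm (Fin n)}
    {φ : (⨂[O] _i : Fin n, M) →ₗ[O] ⨂[O] _i : Fin n, M}
    (hφ : ∀ m : Fin n → M, φ (tprod O m) = tprod O fun i => m (σ.symm i)) (g : Fin n → G) :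
    tensorGrading O (fun _ => ℳ) g ≤
      (tensorGrading O (fun _ => ℳ) fun i => g (σ.symm i)).comap φ :=
  tensorGrading_le_iff.2 fun m hm => by
    rw [Submodule.mem_comap, hφ]
    exact tprod_mem_tensorGrading fun i => hm (σ.symm i)

end TensorGrading

section WreathPresentation

variable {O : Type*} [CommRing O] {n : ℕ} {T W : Type*} [Ring T] [Algebra O T] [Ring W]
  [Algebra O W]

/-- The `O`-linear map `t ↦ t ⊗ σ` from `T` to the `σ`-summand of `T ≀ Sₙ`, for the wreath
product presented by `(e, s)`. -/
def wreathInclusion (e : T →ₐ[O] W) (s : Equiv.Perm (Fin n) →* Wˣ) (σ : Equiv.Perm (Fin n)) :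
    T →ₗ[O] W :=
  (LinearMap.mulRight O ((s σ : Wˣ) : W)).comp e.toLinearMap

theorem wreathInclusion_one_one (e : T →ₐ[O] W) (s : Equiv.Perm (Fin n) →* Wˣ) :
    wreathInclusion e s 1 1 = 1 := by
  simp [wreathInclusion]

theorem range_wreathInclusion (e : T →ₐ[O] W) (s : Equiv.Perm (Fin n) →* Wˣ)
    (σ : Equiv.Perm (Fin n)) : LinearMap.range (wreathInclusion e s σ) =
      (Subalgebra.toSubmodule e.range).map (LinearMap.mulRight O ((s σ : Wˣ) : W)) :=
  LinearMap.range_comp _ _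

namespace IsWreathPresentation

variable {e : T →ₐ[O] W} {s : Equiv.Perm (Fin n) →* Wˣ} {Φ : Equiv.Perm (Fin n) →* (T ≃ₐ[O] T)}

theorem wreathInclusion_injective (hW : IsWreathPresentation O e s Φ) (σ : Equiv.Perm (Fin n)) :
    Function.Injective (wreathInclusion e s σ) :=
  (s σ).isUnit.mul_left_injective.comp hW.1

theorem iSupIndep_range (hW : IsWreathPresentation O e s Φ) :
    iSupIndep fun σ => LinearMap.range (wreathInclusion e s σ) := by
  let := Classical.decEq (Equiv.Perm (Fin n))
  simp only [range_wreathInclusion]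
  exact hW.2.1.submodule_iSupIndep

theorem iSup_range_eq_top (hW : IsWreathPresentation O e s Φ) :
    ⨆ σ, LinearMap.range (wreathInclusion e s σ) = ⊤ := by
  let := Classical.decEq (Equiv.Perm (Fin n))
  simp only [range_wreathInclusion]
  exact hW.2.1.submodule_iSup_eq_top

theorem wreathInclusion_mul (hW : IsWreathPresentation O e s Φ) (σ τ : Equiv.Perm (Fin n))
    (t t' : T) : wreathInclusion e s σ t * wreathInclusion e s τ t' =
      wreathInclusion e s (σ * τ) (t * Φ σ t') := by
  change e t * s σ * (e t' * s τ) = e (t * Φ σ t') * (s (σ * τ) : Wˣ)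
  calc e t * s σ * (e t' * s τ) = e t * (s σ * e t') * s τ := by simp only [mul_assoc]
    _ = e t * (e (Φ σ t') * s σ) * s τ := by rw [hW.2.2]
    _ = e (t * Φ σ t') * (s (σ * τ) : Wˣ) := by
      simp only [map_mul, Units.val_mul, mul_assoc]

theorem iSupIndep_map (hW : IsWreathPresentation O e s Φ) {K : Type*} {𝒯 : K → Submodule O T}
    (hind : iSupIndep 𝒯) :
    iSupIndep fun x : Σ _ : Equiv.Perm (Fin n), K => (𝒯 x.2).map (wreathInclusion e s x.1) :=
  iSupIndep_sigma hW.iSupIndep_range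
    (fun σ => LinearMap.iSupIndep_map _ (hW.wreathInclusion_injective σ) hind)
    fun _ _ => LinearMap.map_le_range

theorem iSup_map_eq_top (hW : IsWreathPresentation O e s Φ) {K : Type*} {𝒯 : K → Submodule O T}
    (htop : ⨆ k, 𝒯 k = ⊤) :
    ⨆ x : Σ _ : Equiv.Perm (Fin n), K, (𝒯 x.2).map (wreathInclusion e s x.1) = ⊤ := by
  simp only [iSup_sigma, ← Submodule.map_iSup, htop, ← LinearMap.range_eq_map,
    hW.iSup_range_eq_top]

theorem wreathInclusion_mul_eq_one (hW : IsWreathPresentation O e s Φ) (σ : Equiv.Perm (Fin n))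
    {t t' : T} (h : t * t' = 1) :
    wreathInclusion e s σ t * wreathInclusion e s σ⁻¹ (Φ σ⁻¹ t') = 1 := by
  rw [hW.wreathInclusion_mul, mul_inv_cancel, ← AlgEquiv.mul_apply, ← map_mul, mul_inv_cancel,
    map_one, AlgEquiv.one_apply, h, wreathInclusion_one_one]

theorem wreathInclusion_inv_mul_eq_one (hW : IsWreathPresentation O e s Φ)
    (σ : Equiv.Perm (Fin n)) {t t' : T} (h : t' * t = 1) :
    wreathInclusion e s σ⁻¹ (Φ σ⁻¹ t') * wreathInclusion e s σ t = 1 := by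
  rw [hW.wreathInclusion_mul, inv_mul_cancel, ← map_mul, h, map_one, wreathInclusion_one_one]

end IsWreathPresentation

end WreathPresentation

section WreathGrading

/-- The underlying set of `G ≀ Sₙ` as `Sₙ × Gⁿ`, fibred over `Sₙ` so that it indexes a
decomposition of each summand of `T ≀ Sₙ`. -/
def wreathGroupEquivSigma (G : Type*) [Group G] (n : ℕ) :
    WreathGroup G n ≃ Σ _ : Equiv.Perm (Fin n), (Fin n → G) where
  toFun x := ⟨x.right, x.left⟩
  invFun y := ⟨y.2, y.1⟩

variable {O : Type*} [CommRing O] {G : Type*} [Group G] {n : ℕ} {A W : Type*} [Ring A]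
  [Algebra O A] [Ring W] [Algebra O W] {𝒜 : G → Submodule O A}
  {Φ : Equiv.Perm (Fin n) →* ((⨂[O] _i : Fin n, A) ≃ₐ[O] (⨂[O] _i : Fin n, A))}
  {e : (⨂[O] _i : Fin n, A) →ₐ[O] W} {s : Equiv.Perm (Fin n) →* Wˣ}

theorem wreathInclusion_mem_wreathGrading {x : WreathGroup G n} {t : ⨂[O] _i : Fin n, A}
    (ht : t ∈ tensorGrading O (fun _ => 𝒜) x.left) :
    wreathInclusion e s x.right t ∈ wreathGrading O 𝒜 e s x :=
  Submodule.mem_map_of_mem ht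

theorem wreathGrading_eq_comp :
    wreathGrading O 𝒜 e s =
      (fun x : Σ _ : Equiv.Perm (Fin n), (Fin n → G) =>
        (tensorGrading O (fun _ => 𝒜) x.2).map (wreathInclusion e s x.1)) ∘
      wreathGroupEquivSigma G n :=
  rfl

theorem iSupIndep_wreathGrading (hW : IsWreathPresentation O e s Φ)
    (hind : iSupIndep (tensorGrading O fun _ : Fin n => 𝒜)) :
    iSupIndep (wreathGrading O 𝒜 e s) := by
  rw [wreathGrading_eq_comp]
  exact (hW.iSupIndep_map hind).comp (wreathGroupEquivSigma G n).injective

theorem iSup_wreathGrading_eq_top (hW : IsWreathPresentation O e s Φ)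
    (htop : ⨆ g, tensorGrading O (fun _ : Fin n => 𝒜) g = ⊤) :
    ⨆ x, wreathGrading O 𝒜 e s x = ⊤ := by
  rw [← hW.iSup_map_eq_top htop, ← (wreathGroupEquivSigma G n).iSup_comp, wreathGrading_eq_comp]
  simp only [Function.comp_apply]

theorem isAlgebraGrading_wreathGrading (h𝒜 : IsAlgebraGrading O 𝒜)
    (hΦ : ∀ (σ : Equiv.Perm (Fin n)) (a : Fin n → A),
      Φ σ (tprod O a) = tprod O (fun i => a (σ.symm i)))
    (hW : IsWreathPresentation O e s Φ) : IsAlgebraGrading O (wreathGrading O 𝒜 e s) := by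
  obtain ⟨hone, hmul, hind, htop⟩ := isAlgebraGrading_iff.1
    (isAlgebraGrading_tensorGrading (n := n) (𝒜 := fun _ => 𝒜) fun _ => h𝒜)
  refine isAlgebraGrading_iff.2 ⟨?_, ?_, iSupIndep_wreathGrading hW hind,
    iSup_wreathGrading_eq_top hW htop⟩
  · rw [← wreathInclusion_one_one e s]
    exact wreathInclusion_mem_wreathGrading (x := 1) hone
  · rintro x y _ ⟨t, ht, rfl⟩ _ ⟨t', ht', rfl⟩
    have hperm : Φ x.right t' ∈ tensorGrading O (fun _ => 𝒜) (permMulAut G n x.right y.left) :=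
      tensorGrading_le_comap_perm (φ := (Φ x.right).toLinearMap) (hΦ x.right) y.left ht'
    have hprod := wreathInclusion_mem_wreathGrading (e := e) (s := s) (x := x * y)
      (hmul t ht _ hperm)
    rwa [SemidirectProduct.mul_right, ← hW.wreathInclusion_mul] at hprod

end WreathGrading

theorem stmt7 (O : Type*) [CommRing O] (G : Type*) [Group G] (n : ℕ) (hn : 1 ≤ n)
    (A : Type*) [Ring A] [Algebra O A]
    (𝒜 : G → Submodule O A) (h𝒜 : IsCrossedProduct O 𝒜)
    -- the permutation action of `Sₙ` on `A^{⊗n}`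
    (Φ : Equiv.Perm (Fin n) →* ((⨂[O] _i : Fin n, A) ≃ₐ[O] (⨂[O] _i : Fin n, A)))
    (hΦ : ∀ (σ : Equiv.Perm (Fin n)) (a : Fin n → A),
      Φ σ (tprod O a) = tprod O (fun i => a (σ.symm i)))
    -- the wreath product algebra `W = A ≀ Sₙ`
    (W : Type*) [Ring W] [Algebra O W]
    (e : (⨂[O] _i : Fin n, A) →ₐ[O] W) (s : Equiv.Perm (Fin n) →* Wˣ)
    (hW : IsWreathPresentation O e s Φ) :
    IsCrossedProduct O (wreathGrading O 𝒜 e s) ∧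
    -- explicitly: `(u_{g₁} ⊗ … ⊗ u_{gₙ}) ⊗ σ` is an invertible homogeneous element
    -- of the `((g₁,…,gₙ),σ)`-component, with inverse
    -- `(u_{g_{σ(1)}}⁻¹ ⊗ … ⊗ u_{g_{σ(n)}}⁻¹) ⊗ σ⁻¹`
    ∀ (u : G → Aˣ), (∀ g : G, ((u g : A) ∈ 𝒜 g)) →
      ∀ (g : Fin n → G) (σ : Equiv.Perm (Fin n)),
        (e (tprod O (fun i => (u (g i) : A))) * ((s σ : Wˣ) : W) ∈
          wreathGrading O 𝒜 e s ⟨g, σ⟩) ∧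
        (e (tprod O (fun i => (u (g i) : A))) * ((s σ : Wˣ) : W)) *
          (e (tprod O (fun i => (((u (g (σ i)))⁻¹ : Aˣ) : A))) * ((s σ⁻¹ : Wˣ) : W)) = 1 ∧
        (e (tprod O (fun i => (((u (g (σ i)))⁻¹ : Aˣ) : A))) * ((s σ⁻¹ : Wˣ) : W)) *
          (e (tprod O (fun i => (u (g i) : A))) * ((s σ : Wˣ) : W)) = 1 := by
  have hunit (u : G → Aˣ) (g : Fin n → G) :
      tprod O (fun i => (u (g i) : A)) * tprod O (fun i => (((u (g i))⁻¹ : Aˣ) : A)) = 1 ∧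
      tprod O (fun i => (((u (g i))⁻¹ : Aˣ) : A)) * tprod O (fun i => (u (g i) : A)) = 1 :=
    ⟨tprod_mul_tprod_eq_one fun i => (u (g i)).mul_inv,
      tprod_mul_tprod_eq_one fun i => (u (g i)).inv_mul⟩
  refine ⟨⟨isAlgebraGrading_wreathGrading h𝒜.1 hΦ hW, fun x => ?_⟩, fun u hu g σ => ?_⟩
  · choose u hu using h𝒜.2
    exact ⟨⟨_, _, hW.wreathInclusion_mul_eq_one x.right (hunit u x.left).1,
      hW.wreathInclusion_inv_mul_eq_one x.right (hunit u x.left).2⟩,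
      wreathInclusion_mem_wreathGrading (tprod_mem_tensorGrading fun i => hu (x.left i))⟩
  · have hinv : tprod O (fun i => (((u (g (σ i)))⁻¹ : Aˣ) : A)) =
        Φ σ⁻¹ (tprod O fun i => (((u (g i))⁻¹ : Aˣ) : A)) :=
      (hΦ σ⁻¹ fun i => (((u (g i))⁻¹ : Aˣ) : A)).symm
    rw [hinv]
    exact ⟨wreathInclusion_mem_wreathGrading (x := ⟨g, σ⟩)
        (tprod_mem_tensorGrading fun i => hu (g i)),
      hW.wreathInclusion_mul_eq_one σ (hunit u g).1,
      hW.wreathInclusion_inv_mul_eq_one σ (hunit u g).2⟩
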